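/- (Vanishing of off-the-ground-chaos compositions, d ≥ 3.) Let d ≥ 3, κ ∈ {1,2}, a ≥ 1 and σ ∈ {+1,−1}^a, and define heights p₀ := 1 and p_s := 1 + Σ_{r=1}^s σ_r; assume p_s ≥ 1 for all s and m := p_a ≥ 2. For each s with σ_s = +1 choose indices 1 ≤ i_s < i'_s ≤ p_s + κ − 1, and for each s with σ_s = −1 choose an index 1 ≤ q_s ≤ p_s + κ − 1. Fix j₁ ∈ ℤ^d₀ (and j₂ ∈ ℤ^d₀ if κ = 2), and let E ∈ L²_κ be E(k) := 1{k = j₁} if κ = 1 and E(k₁,k₂) := (1{(k₁,k₂)=(j₁,j₂)} + 1{(k₁,k₂)=(j₂,j₁)})/2 if κ = 2. Set Ψ_ε := T^{ε,σ_a}[g_a] ∘ ⋯ ∘ T^{ε,σ₁}[g₁] E ∈ L²_{m+κ−1}, where T^{ε,+1}[g_s] := T^{ε,+}[(i_s,i'_s)] and T^{ε,−1}[g_s] := T^{ε,−}[q_s]. Then, along the sequence ε → 0 with 1/ε ∈ ℕ + 1/2, the limit lim_{ε→0} ‖(−L₀)^{−1/2} Ψ_ε‖_{L²_{m+κ−1}}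 = 0 holds. -/

import Mathlib

open scoped BigOperators
open scoped Classical

noncomputable section

namespace SBE

/-- Lattice points of `ℤ^d`. -/
abbrev ZLat (d : ℕ) := Fin d → ℤ

/-- Kernels of the `n`-th chaos: functions on `n`-tuples of lattice points. -/
abbrev Chaos (d n : ℕ) := (Fin n → ZLat d) → ℂ

/-- Squared Euclidean norm of a lattice point. -/
def nsq {d : ℕ} (k : ZLat d) : ℝ := ∑ i, ((k i : ℝ))^2

/-- Euclidean norm of a lattice point. -/
def eN {d : ℕ} (k : ZLat d) : ℝ := Real.sqrt (nsq k)

/-- Supremum norm of a lattice point. -/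
def sN {d : ℕ} (k : ZLat d) : ℝ := ((Finset.univ.sup fun i => (k i).natAbs : ℕ) : ℝ)

/-- The norm used in the Fourier cutoff: Euclidean if `d = 2`, supremum otherwise. -/
def cutNorm (d : ℕ) (k : ZLat d) : ℝ := if d = 2 then eN k else sN k

/-- `w · k`. -/
def dotw {d : ℕ} (w : Fin d → ℝ) (k : ZLat d) : ℝ := ∑ i, w i * (k i : ℝ)

/-- `|k_{1:n}|² = Σ_i |k_i|²`. -/
def wSq {d n : ℕ} (k : Fin n → ZLat d) : ℝ := ∑ a, nsq (k a)

/-- The coupling constant `λ_ε`. -/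
def lam (d : ℕ) (ε : ℝ) : ℝ :=
  if d = 2 then (Real.sqrt (Real.log (1 / ε^2)))⁻¹ else ε ^ ((d:ℝ)/2 - 1)

/-- The Fourier cutoff indicator `J^ε_{ℓ,m}`. -/
def Jind (d : ℕ) (ε : ℝ) (l m : ZLat d) : ℝ :=
  if 0 < ε * cutNorm d l ∧ ε * cutNorm d l ≤ 1 ∧
     0 < ε * cutNorm d m ∧ ε * cutNorm d m ≤ 1 ∧
     0 < ε * cutNorm d (l + m) ∧ ε * cutNorm d (l + m) ≤ 1 then 1 else 0

/-- Symmetry of a kernel under permutation of its arguments. -/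
def Symm {d n : ℕ} (f : Chaos d n) : Prop :=
  ∀ (σ : Equiv.Perm (Fin n)) (k : Fin n → ZLat d), f (k ∘ σ) = f k

/-- A kernel vanishes whenever one of its arguments is the zero frequency
(i.e. it is really a function on `(ℤ^d_0)^n`). -/
def SuppOk {d n : ℕ} (f : Chaos d n) : Prop :=
  ∀ k : Fin n → ZLat d, (∃ a, k a = 0) → f k = 0

/-- Summand of `‖(-L₀)^s f‖²`. -/
def sobTerm {d n : ℕ} (s : ℝ) (f : Chaos d n) (k : Fin n → ZLat d) : ℝ :=
  (wSq k / 2) ^ (2*s) * ‖f k‖^2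

/-- `‖(-L₀)^s f‖² = n! Σ_k (|k_{1:n}|²/2)^{2s} |f(k)|²`. -/
def sobSq {d n : ℕ} (s : ℝ) (f : Chaos d n) : ℝ := (n.factorial : ℝ) * ∑' k, sobTerm s f k

/-- Remove the entries `i < j` from an `(n+2)`-tuple (order preservingly). -/
def remove2 {X : Type*} {n : ℕ} (k : Fin (n+2) → X) (i j : Fin (n+2)) (h : i < j) :
    Fin n → X :=
  fun a => k (j.succAbove ((Fin.castLT i
    (Nat.lt_of_lt_of_le (Fin.lt_def.mp h) (Nat.lt_succ_iff.mp j.isLt))).succAbove a))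

/-- The operator `A⁺_ε : ΓL²_{n+1} → ΓL²_{n+2}`. -/
def Aplus (d : ℕ) (w : Fin d → ℝ) (ε : ℝ) {n : ℕ} (f : Chaos d (n+1)) : Chaos d (n+2) :=
  fun k => -(2 * Complex.I / (((2*Real.pi) ^ ((d:ℝ)/2) : ℝ) : ℂ)) *
      ((lam d ε / ((n:ℝ)+2) : ℝ) : ℂ) *
    ∑ i : Fin (n+2), ∑ j : Fin (n+2),
      if h : i < j then
        ((dotw w (k i + k j) : ℝ) : ℂ) * ((Jind d ε (k i) (k j) : ℝ) : ℂ) *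
          f (Fin.cons (k i + k j) (remove2 k i j h))
      else 0

/-- The operator `A⁻_ε : ΓL²_{n+2} → ΓL²_{n+1}`. -/
def Aminus (d : ℕ) (w : Fin d → ℝ) (ε : ℝ) {n : ℕ} (f : Chaos d (n+2)) : Chaos d (n+1) :=
  fun k => (2 * Complex.I / (((2*Real.pi) ^ ((d:ℝ)/2) : ℝ) : ℂ)) *
      ((((n:ℝ)+2) * lam d ε : ℝ) : ℂ) *
    ∑ j : Fin (n+1), ((dotw w (k j) : ℝ) : ℂ) *
      ∑' l : ZLat d, ((Jind d ε l (k j - l) : ℝ) : ℂ) *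
        f (Fin.cons l (Fin.cons (k j - l) (fun a => k (j.succAbove a))))

/-- `L²` norm squared (no factorial): `Σ_k |f(k)|²`. -/
def l2Sq {d n : ℕ} (f : Chaos d n) : ℝ := ∑' k, ‖f k‖^2

/-- Diagonal operator `(−L₀)^s`, multiplying the kernel at `k` by `(|k_{1:n}|²/2)^s`. -/
def negPow {d n : ℕ} (s : ℝ) (f : Chaos d n) : Chaos d n :=
  fun k => (((wSq k / 2) ^ s : ℝ) : ℂ) * f k

/-- The labelled creation operator `A⁺_ε[(i,j)] : L²_{n+1} → L²_{n+2}`. -/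
def AplusL (d : ℕ) (w : Fin d → ℝ) (ε : ℝ) {n : ℕ} (i j : Fin (n+2)) (h : i < j)
    (f : Chaos d (n+1)) : Chaos d (n+2) :=
  fun k => -((2 * Complex.I * ((ε ^ ((d:ℝ)/2 - 1) : ℝ) : ℂ)) /
        (((2*Real.pi) ^ ((d:ℝ)/2) : ℝ) : ℂ)) *
      ((dotw w (k i + k j) : ℝ) : ℂ) * ((Jind d ε (k i) (k j) : ℝ) : ℂ) *
      f (Fin.cons (k i + k j) (remove2 k i j h))

/-- The labelled annihilation operator `A⁻_ε[q] : L²_{n+2} → L²_{n+1}`. -/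
def AminusL (d : ℕ) (w : Fin d → ℝ) (ε : ℝ) {n : ℕ} (q : Fin (n+1))
    (f : Chaos d (n+2)) : Chaos d (n+1) :=
  fun k => ((2 * Complex.I * ((ε ^ ((d:ℝ)/2 - 1) : ℝ) : ℂ)) /
        (((2*Real.pi) ^ ((d:ℝ)/2) : ℝ) : ℂ)) *
      ((dotw w (k q) : ℝ) : ℂ) *
    ∑' l : ZLat d, ((Jind d ε l (k q - l) : ℝ) : ℂ) *
      f (Fin.cons l (Fin.cons (k q - l) (fun a => k (q.succAbove a))))

/-- `T^{ε,+}[(i,j)] = (−L₀)^{−1/2} A⁺_ε[(i,j)] (−L₀)^{−1/2}`. -/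
def TplusL (d : ℕ) (w : Fin d → ℝ) (ε : ℝ) {n : ℕ} (i j : Fin (n+2)) (h : i < j)
    (f : Chaos d (n+1)) : Chaos d (n+2) :=
  negPow (-(1/2)) (AplusL d w ε i j h (negPow (-(1/2)) f))

/-- `T^{ε,−}[q] = (−L₀)^{−1/2} A⁻_ε[q] (−L₀)^{−1/2}`. -/
def TminusL (d : ℕ) (w : Fin d → ℝ) (ε : ℝ) {n : ℕ} (q : Fin (n+1))
    (f : Chaos d (n+2)) : Chaos d (n+1) :=
  negPow (-(1/2)) (AminusL d w ε q (negPow (-(1/2)) f))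

/-- A single step of a chaos path: either a creation step `T^{ε,+}[(i,j)]`
(raising the chaos level from `n+1` to `n+2`) or an annihilation step `T^{ε,−}[q]`
(lowering it from `n+2` to `n+1`).  The typing automatically keeps all levels `≥ 1`. -/
inductive PMove : ℕ → ℕ → Type where
  | plus  : (n : ℕ) → (i j : Fin (n+2)) → i < j → PMove (n+1) (n+2)
  | minus : (n : ℕ) → (q : Fin (n+1)) → PMove (n+2) (n+1)

/-- A path of creation/annihilation steps from chaos level `a` to chaos level `b`. -/
inductive PPath : ℕ → ℕ → Type where
  | nil : (n : ℕ) → PPath n n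
  | cons : {a b c : ℕ} → PMove a b → PPath b c → PPath a c

/-- Action of a single step. -/
def PMove.app (d : ℕ) (w : Fin d → ℝ) (ε : ℝ) :
    {a b : ℕ} → PMove a b → Chaos d a → Chaos d b
  | _, _, PMove.plus _ i j h, f => TplusL d w ε i j h f
  | _, _, PMove.minus _ q, f => TminusL d w ε q f

/-- Action of a path: the composition `T^{ε,σ_a}[g_a] ∘ ⋯ ∘ T^{ε,σ₁}[g₁]`. -/
def PPath.app (d : ℕ) (w : Fin d → ℝ) (ε : ℝ) :
    {a b : ℕ} → PPath a b → Chaos d a → Chaos d b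
  | _, _, PPath.nil _, f => f
  | _, _, PPath.cons mv p, f => PPath.app d w ε p (PMove.app d w ε mv f)

/-- All chaos levels visited by the path are `≥ m`. -/
def PPath.levelsGE (m : ℕ) : {a b : ℕ} → PPath a b → Prop
  | a, _, PPath.nil _ => m ≤ a
  | a, _, PPath.cons _ p => m ≤ a ∧ PPath.levelsGE m p

/-- Number of steps of the path. -/
def PPath.length : {a b : ℕ} → PPath a b → ℕ
  | _, _, PPath.nil _ => 0
  | _, _, PPath.cons _ p => PPath.length p + 1

/-- The (symmetrised) elementary kernel `E ∈ L²_κ` built from the frequencies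
`j : Fin κ → ℤ^d`; for `κ = 1` it is `1_{k = j₁}` and for `κ = 2` it is
`(1_{(k₁,k₂)=(j₁,j₂)} + 1_{(k₁,k₂)=(j₂,j₁)})/2`. -/
def Ebase (d κ : ℕ) (j : Fin κ → ZLat d) : Chaos d κ :=
  fun k => (((κ.factorial : ℝ))⁻¹ : ℂ) *
    ∑ σ : Equiv.Perm (Fin κ), if k = j ∘ σ then 1 else 0

/-!
Measure a kernel `f` by its mass on the slabs `|∑ b_u k_u| ≤ R`, for integer coefficient vectors
`b`. A creation step produces a pair with fixed sum and one free loop momentum, weighted by the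
propagator `ε^(d-2) |l|⁻²`, whose sum over the cut-off lattice is bounded when `d ≥ 3`. If `b`
takes different values on the two new momenta, then the slab confines the loop momentum to at most
`(2R+1)^d` lattice points, so that it only carries mass of order `ε^(d-2) (2R+1)^d`. If `b` takes
the same value on both, it is the pull-back of a coefficient vector at the previous level. An
annihilation step is estimated by Cauchy–Schwarz in the loop momentum, and there every `b` is
pulled back injectively to the previous level. Hence the coefficient vectors whose slabs may be
heavy always lie in a submodule of rank at most the initial level `κ`. At a final level `M > κ`
some single momentum `k_u` escapes this submodule: the slab `|k_u| ≤ R` is light, while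
off the slab `(-L₀)⁻¹` gains a factor `2 R⁻²`. Choosing `R` as a negative power of `ε` concludes.
-/

open Filter Topology
open scoped ENNReal NNReal

section LatticeSums

variable {d n : ℕ}

theorem nsq_nonneg (k : ZLat d) : 0 ≤ nsq k :=
  Finset.sum_nonneg fun _ _ => sq_nonneg _

theorem wSq_nonneg (k : Fin n → ZLat d) : 0 ≤ wSq k :=
  Finset.sum_nonneg fun _ _ => nsq_nonneg _

theorem nsq_le_wSq (k : Fin n → ZLat d) (u : Fin n) : nsq (k u) ≤ wSq k :=
  Finset.single_le_sum (f := fun u => nsq (k u)) (fun _ _ => nsq_nonneg _) (Finset.mem_univ u)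

theorem norm_le_sqrt_nsq (k : ZLat d) : ‖k‖ ≤ √(nsq k) := by
  refine (pi_norm_le_iff_of_nonneg (Real.sqrt_nonneg _)).mpr fun c => ?_
  rw [Int.norm_eq_abs]
  exact Real.abs_le_sqrt (Finset.single_le_sum (f := fun c => (k c : ℝ) ^ 2)
    (fun _ _ => sq_nonneg _) (Finset.mem_univ c))

theorem norm_sq_le_nsq (k : ZLat d) : ‖k‖ ^ 2 ≤ nsq k := by
  simpa only [Real.sq_sqrt (nsq_nonneg k)] using
    pow_le_pow_left₀ (norm_nonneg k) (norm_le_sqrt_nsq k) 2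

theorem one_le_nsq {k : ZLat d} (hk : k ≠ 0) : 1 ≤ nsq k := by
  obtain ⟨c, hc⟩ := Function.ne_iff.mp hk
  have h_norm : 1 ≤ ‖k‖ :=
    calc (1 : ℝ) ≤ |(k c : ℝ)| := mod_cast Int.one_le_abs hc
      _ = ‖k c‖ := (Int.norm_eq_abs _).symm
      _ ≤ ‖k‖ := norm_le_pi_norm k c
  exact (one_le_pow₀ h_norm).trans (norm_sq_le_nsq k)

theorem sN_eq_norm (k : ZLat d) : sN k = ‖k‖ := by
  refine le_antisymm ?_ ((pi_norm_le_iff_of_nonneg (Nat.cast_nonneg _)).mpr fun c => ?_)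
  · obtain h | ⟨c, -, hc⟩ := (Finset.univ : Finset (Fin d)).eq_empty_or_nonempty.imp_right
      fun h => Finset.exists_mem_eq_sup _ h fun c => (k c).natAbs
    · simp [sN, h]
    · rw [sN, hc, Nat.cast_natAbs, Int.cast_abs, ← Int.norm_eq_abs]
      exact norm_le_pi_norm k c
  · rw [Int.norm_eq_abs, ← Int.cast_abs, ← Nat.cast_natAbs]
    exact Nat.cast_le.mpr (Finset.le_sup (f := fun c => (k c).natAbs) (Finset.mem_univ c))

theorem encard_closedBall_le (z : ZLat d) {R : ℝ} (hR : 0 ≤ R) :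
    ((Metric.closedBall z R).encard : ℝ≥0∞) ≤ ENNReal.ofReal ((2 * R + 1) ^ d) := by
  have h_pi : Metric.closedBall z R =
      Fintype.piFinset fun c => Finset.Icc ⌈(z c : ℝ) - R⌉ ⌊(z c : ℝ) + R⌋ := by
    ext l
    simp only [closedBall_pi z hR, Int.closedBall_eq_Icc, Set.mem_univ_pi, Finset.mem_coe,
      Fintype.mem_piFinset, Finset.mem_Icc, Set.mem_Icc]
  have h_side (c : Fin d) :
      ((Finset.Icc ⌈(z c : ℝ) - R⌉ ⌊(z c : ℝ) + R⌋).card : ℝ) ≤ 2 * R + 1 := by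
    have h_floor := Int.floor_le ((z c : ℝ) + R)
    have h_ceil := Int.le_ceil ((z c : ℝ) - R)
    rw [Int.card_Icc, ← Int.cast_natCast, Int.toNat_eq_max, Int.cast_max, Int.cast_zero]
    refine max_le ?_ (by positivity)
    push_cast
    linarith
  rw [h_pi, Set.encard_coe_eq_coe_finsetCard, ENat.toENNReal_coe, ← ENNReal.ofReal_natCast]
  refine ENNReal.ofReal_le_ofReal ?_
  rw [Fintype.card_piFinset, Nat.cast_prod]
  calc _ ≤ ∏ _c : Fin d, (2 * R + 1) :=
        Finset.prod_le_prod (fun _ _ => Nat.cast_nonneg _) fun c _ => h_side c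
    _ = (2 * R + 1) ^ d := by simp only [Finset.prod_const, Finset.card_univ, Fintype.card_fin]

theorem encard_norm_zsmul_add_le {a : ℤ} (ha : a ≠ 0) (z : ZLat d) {R : ℝ} (hR : 0 ≤ R) :
    ({l : ZLat d | ‖a • l + z‖ ≤ R}.encard : ℝ≥0∞) ≤ ENNReal.ofReal ((2 * R + 1) ^ d) := by
  refine le_trans (ENat.toENNReal_le.mpr ?_) (encard_closedBall_le (-z) hR)
  refine Set.encard_le_encard_of_injOn (f := fun l => a • l) (fun l hl => ?_)
    (smul_right_injective _ ha).injOn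
  rw [Metric.mem_closedBall, dist_eq_norm, sub_neg_eq_add]
  exact hl

/-- Bernoulli's inequality for the exponent `1 - s`, applied to `a / (a + 1) = 1 - 1 / (a + 1)`. -/
theorem rpow_neg_le_rpow_one_sub_sub {s : ℝ} (hs0 : 0 ≤ s) (hs1 : s ≤ 1) (a : ℕ) :
    (1 - s) * (1 + (a : ℝ)) ^ (-s) ≤ ((a + 1 : ℕ) : ℝ) ^ (1 - s) - (a : ℝ) ^ (1 - s) := by
  have ha : (0 : ℝ) < 1 + a := by positivity
  have h_bernoulli : ((a : ℝ) / (1 + a)) ^ (1 - s) ≤ 1 + (1 - s) * (-(1 / (1 + a))) := by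
    have h := rpow_one_add_le_one_add_mul_self (s := -(1 / (1 + (a : ℝ)))) (p := 1 - s)
      (by rw [neg_le_neg_iff, div_le_one ha]; linarith [a.cast_nonneg (α := ℝ)])
      (by linarith) (by linarith)
    rwa [show 1 + -(1 / (1 + (a : ℝ))) = a / (1 + a) by field_simp; ring] at h
  have h_pow : (1 + (a : ℝ)) ^ (1 - s) = (1 + a) * (1 + (a : ℝ)) ^ (-s) := by
    rw [sub_eq_add_neg, Real.rpow_add ha, Real.rpow_one]
  rw [Real.div_rpow (by positivity) ha.le, div_le_iff₀ (by positivity)] at h_bernoulli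
  have h_expand : (1 + (1 - s) * (-(1 / (1 + a)))) * (1 + (a : ℝ)) ^ (1 - s) =
      (1 + (a : ℝ)) ^ (1 - s) - (1 - s) * (1 + (a : ℝ)) ^ (-s) := by
    rw [h_pow]
    field_simp
    ring
  rw [Nat.cast_add_one, add_comm (a : ℝ) 1]
  linarith

theorem sum_Icc_one_add_abs_rpow_neg_le {s : ℝ} (hs0 : 0 ≤ s) (hs1 : s < 1) (N : ℕ) :
    ∑ a ∈ Finset.Icc (-N : ℤ) N, (1 + |(a : ℝ)|) ^ (-s) ≤
      2 / (1 - s) * ((N + 1 : ℕ) : ℝ) ^ (1 - s) := by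
  have h_even : Function.Even fun a : ℤ => (1 + |(a : ℝ)|) ^ (-s) := fun a => by
    simp only [Int.cast_neg, abs_neg]
  have h_half : ∑ a ∈ Finset.range (N + 1), (1 - s) * (1 + (a : ℝ)) ^ (-s) ≤
      ((N + 1 : ℕ) : ℝ) ^ (1 - s) := by
    refine (Finset.sum_le_sum fun a _ => rpow_neg_le_rpow_one_sub_sub hs0 hs1.le a).trans_eq ?_
    rw [Finset.sum_range_sub (fun a : ℕ => (a : ℝ) ^ (1 - s)), Nat.cast_zero,
      Real.zero_rpow (by linarith), sub_zero]
  rw [Finset.sum_Icc_of_even_eq_range h_even, div_mul_eq_mul_div, le_div_iff₀ (by linarith)]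
  simp only [Int.cast_natCast, Nat.abs_cast, Int.cast_zero, abs_zero, add_zero, Real.one_rpow,
    nsmul_eq_mul, Nat.cast_ofNat]
  rw [← Finset.mul_sum] at h_half
  linarith

/-- Each factor on the right is at least `(2 |l|)^(-2/d)`. -/
theorem inv_nsq_le_prod (hd : d ≠ 0) {l : ZLat d} (hl : l ≠ 0) :
    (nsq l)⁻¹ ≤ 4 * ∏ c, (1 + |(l c : ℝ)|) ^ (-(2 / (d : ℝ))) := by
  have h_one : 1 ≤ √(nsq l) := Real.one_le_sqrt.mpr (one_le_nsq hl)
  have h_factor (c : Fin d) :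
      (2 * √(nsq l)) ^ (-(2 / (d : ℝ))) ≤ (1 + |(l c : ℝ)|) ^ (-(2 / (d : ℝ))) := by
    have h_coord : |(l c : ℝ)| ≤ √(nsq l) :=
      ((Int.norm_eq_abs _).symm.trans_le (norm_le_pi_norm l c)).trans (norm_le_sqrt_nsq l)
    exact Real.rpow_le_rpow_of_nonpos (by positivity) (by linarith)
      (neg_nonpos.mpr (by positivity))
  have h_exp : -(2 / (d : ℝ)) * d = -(2 : ℕ) := by
    field_simp
    norm_num
  calc (nsq l)⁻¹ = 4 * ∏ _c : Fin d, (2 * √(nsq l)) ^ (-(2 / (d : ℝ))) := by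
        rw [Finset.prod_const, Finset.card_univ, Fintype.card_fin, ← Real.rpow_natCast,
          ← Real.rpow_mul (by positivity), h_exp, Real.rpow_neg (by positivity),
          Real.rpow_natCast, mul_pow, Real.sq_sqrt (nsq_nonneg l), mul_inv]
        ring
    _ ≤ _ := mul_le_mul_of_nonneg_left
        (Finset.prod_le_prod (fun _ _ => by positivity) fun c _ => h_factor c) (by norm_num)

/-- The cut-off propagator `ε^(d-2) |l|⁻²` on `0 < ε |l|_∞ ≤ 1`. It carries the square of the
coupling `ε^(d/2-1)`, so that it bounds the square of a single vertex. -/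
def propagator (ε : ℝ) (l : ZLat d) : ℝ :=
  ε ^ ((d : ℝ) - 2) * if l ≠ 0 ∧ ε * ‖l‖ ≤ 1 then (nsq l)⁻¹ else 0

theorem propagator_nonneg {ε : ℝ} (hε : 0 ≤ ε) (l : ZLat d) : 0 ≤ propagator ε l := by
  have h_nsq := nsq_nonneg l
  unfold propagator
  positivity

theorem propagator_le {ε : ℝ} (hε : 0 ≤ ε) (l : ZLat d) :
    propagator ε l ≤ ε ^ ((d : ℝ) - 2) := by
  refine mul_le_of_le_one_right (by positivity) ?_
  split_ifs with hl
  · exact inv_le_one_of_one_le₀ (one_le_nsq hl.1)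
  · exact zero_le_one

theorem tsum_propagator_le_of_encard_le {ε : ℝ} (hε : 0 ≤ ε) {S : Set (ZLat d)} {B : ℝ≥0∞}
    (hS : (S.encard : ℝ≥0∞) ≤ B) :
    ∑' l : S, ENNReal.ofReal (propagator ε (l : ZLat d)) ≤
      B * ENNReal.ofReal (ε ^ ((d : ℝ) - 2)) :=
  calc _ ≤ ∑' _ : S, ENNReal.ofReal (ε ^ ((d : ℝ) - 2)) :=
        ENNReal.tsum_le_tsum fun l => ENNReal.ofReal_le_ofReal (propagator_le hε _)
    _ = S.encard * ENNReal.ofReal (ε ^ ((d : ℝ) - 2)) := ENNReal.tsum_set_const _ _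
    _ ≤ _ := by gcongr

theorem propagator_eq_zero_of_notMem {ε : ℝ} (hε : 0 < ε) {l : ZLat d}
    (hl : l ∉ Fintype.piFinset fun _ : Fin d => Finset.Icc (-⌊ε⁻¹⌋₊ : ℤ) ⌊ε⁻¹⌋₊) :
    propagator ε l = 0 := by
  rw [propagator, if_neg, mul_zero]
  rintro ⟨-, h_cut⟩
  refine hl (Fintype.mem_piFinset.mpr fun c => Finset.mem_Icc.mpr (abs_le.mp ?_))
  rw [Int.abs_eq_natAbs, Nat.cast_le, Nat.le_floor_iff (by positivity), Nat.cast_natAbs,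
    Int.cast_abs, ← Int.norm_eq_abs, inv_eq_one_div, le_div_iff₀' hε]
  exact (mul_le_mul_of_nonneg_left (norm_le_pi_norm l c) hε.le).trans h_cut

theorem rpow_mul_floor_inv_add_one_pow_le {ε θ : ℝ} (hε : 0 < ε) (hε1 : ε ≤ 1) (hθ : 0 ≤ θ) :
    ε ^ θ * ((⌊ε⁻¹⌋₊ + 1 : ℕ) : ℝ) ^ θ ≤ 2 ^ θ := by
  rw [← Real.mul_rpow hε.le (Nat.cast_nonneg _)]
  refine Real.rpow_le_rpow (by positivity) ?_ hθ
  have h_floor : ε * (⌊ε⁻¹⌋₊ : ℝ) ≤ 1 :=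
    (mul_le_mul_of_nonneg_left (Nat.floor_le (by positivity)) hε.le).trans_eq
      (mul_inv_cancel₀ hε.ne')
  push_cast
  linarith

theorem propagator_le_prod (hd : d ≠ 0) {ε : ℝ} (hε : 0 ≤ ε) (l : ZLat d) :
    propagator ε l ≤
      ε ^ ((d : ℝ) - 2) * (4 * ∏ c, (1 + |(l c : ℝ)|) ^ (-(2 / (d : ℝ)))) := by
  unfold propagator
  gcongr
  split_ifs with hl
  · exact inv_nsq_le_prod hd hl.1
  · positivity

theorem exists_tsum_propagator_le (hd : 3 ≤ d) :
    ∃ C : ℝ≥0, ∀ ε : ℝ, 0 < ε → ε ≤ 1 →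
      ∑' l : ZLat d, ENNReal.ofReal (propagator ε l) ≤ C := by
  have hd3 : (3 : ℝ) ≤ d := mod_cast hd
  set s : ℝ := 2 / d with hs
  have hs0 : 0 ≤ s := by positivity
  have hs1 : s < 1 := by rw [hs, div_lt_one] <;> linarith
  refine ⟨(4 * (2 / (1 - s)) ^ d * 2 ^ ((d : ℝ) - 2)).toNNReal, fun ε hε hε1 => ?_⟩
  set N := ⌊ε⁻¹⌋₊
  set box := Fintype.piFinset fun _ : Fin d => Finset.Icc (-N : ℤ) N
  have h_exp : (((N + 1 : ℕ) : ℝ) ^ (1 - s)) ^ d = ((N + 1 : ℕ) : ℝ) ^ ((d : ℝ) - 2) := by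
    rw [← Real.rpow_mul_natCast (Nat.cast_nonneg _), hs]
    congr 1
    field_simp
  rw [tsum_eq_sum fun l hl => by rw [propagator_eq_zero_of_notMem hε hl, ENNReal.ofReal_zero],
    ← ENNReal.ofReal_sum_of_nonneg fun l _ => propagator_nonneg hε.le l]
  refine ENNReal.ofReal_le_ofReal ?_
  calc ∑ l ∈ box, propagator ε l
      ≤ ∑ l ∈ box, ε ^ ((d : ℝ) - 2) * (4 * ∏ c, (1 + |(l c : ℝ)|) ^ (-s)) :=
        Finset.sum_le_sum fun l _ => propagator_le_prod (by lia) hε.le l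
    _ = ε ^ ((d : ℝ) - 2) * (4 * (∑ a ∈ Finset.Icc (-N : ℤ) N, (1 + |(a : ℝ)|) ^ (-s)) ^ d) := by
        rw [← Finset.mul_sum, ← Finset.mul_sum, Finset.sum_pow']
    _ ≤ ε ^ ((d : ℝ) - 2) * (4 * (2 / (1 - s) * ((N + 1 : ℕ) : ℝ) ^ (1 - s)) ^ d) := by
        gcongr
        exact sum_Icc_one_add_abs_rpow_neg_le hs0 hs1 N
    _ = 4 * (2 / (1 - s)) ^ d * (ε ^ ((d : ℝ) - 2) * ((N + 1 : ℕ) : ℝ) ^ ((d : ℝ) - 2)) := by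
        rw [mul_pow, h_exp]
        ring
    _ ≤ 4 * (2 / (1 - s)) ^ d * 2 ^ ((d : ℝ) - 2) := by
        have : 0 < 1 - s := by linarith
        gcongr
        exact rpow_mul_floor_inv_add_one_pow_le hε hε1 (by linarith)

end LatticeSums

section Vertices

variable {d m n : ℕ} {w : Fin d → ℝ} {ε : ℝ}

theorem dotw_sq_mul_inv_le {p : ZLat d} {X : ℝ} (hp : nsq p ≤ X) :
    dotw w p ^ 2 * (X / 2)⁻¹ ≤ 2 * ∑ c, w c ^ 2 := by
  have h_cauchy : dotw w p ^ 2 ≤ (∑ c, w c ^ 2) * nsq p := Finset.sum_mul_sq_le_sq_mul_sq _ _ _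
  have hX : 0 ≤ X := (nsq_nonneg p).trans hp
  calc dotw w p ^ 2 * (X / 2)⁻¹ ≤ (∑ c, w c ^ 2) * X * (X / 2)⁻¹ := by
        gcongr
        exact h_cauchy.trans (by gcongr)
    _ = 2 * (∑ c, w c ^ 2) * (X * X⁻¹) := by
        rw [inv_div]
        ring
    _ ≤ 2 * ∑ c, w c ^ 2 := mul_le_of_le_one_right (by positivity) mul_inv_le_one

theorem Jind_sq_mul_inv_le (hd : d ≠ 2) (hε : 0 ≤ ε) {l : ZLat d} (l' : ZLat d) {X : ℝ}
    (hl : nsq l ≤ X) :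
    Jind d ε l l' ^ 2 * (X / 2)⁻¹ ≤ 2 * if l ≠ 0 ∧ ε * ‖l‖ ≤ 1 then (nsq l)⁻¹ else 0 := by
  have h_nsq := nsq_nonneg l
  simp only [Jind, cutNorm, if_neg hd, sN_eq_norm]
  split_ifs with h_cut h_low h_low
  · have h_one := one_le_nsq h_low.1
    rw [one_pow, one_mul, inv_div, div_eq_mul_inv]
    gcongr
  · exact absurd ⟨norm_pos_iff.mp (pos_of_mul_pos_right h_cut.1 hε), h_cut.2.1⟩ h_low
  all_goals
    rw [zero_pow two_ne_zero, zero_mul]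
    positivity

/-- The matrix element, up to sign, of `T^{ε,±}` between a configuration `x` containing the momentum
`p` and a configuration `k` in which `p` is replaced by the pair `l`, `l'`. -/
def vertex (w : Fin d → ℝ) (ε : ℝ) (x : Fin m → ZLat d) (k : Fin n → ZLat d) (p l l' : ZLat d) :
    ℂ :=
  (((wSq x / 2) ^ (-(1 / 2) : ℝ) * (wSq k / 2) ^ (-(1 / 2) : ℝ) : ℝ) : ℂ) *
    (2 * Complex.I * ((ε ^ ((d : ℝ) / 2 - 1) : ℝ) : ℂ) /
      (((2 * Real.pi) ^ ((d : ℝ) / 2) : ℝ) : ℂ)) *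
    ((dotw w p * Jind d ε l l' : ℝ) : ℂ)

/-- The constant `C_w` for which `C_w ε^(d-2) |l|⁻²` bounds a squared matrix element. -/
def vertexConst (w : Fin d → ℝ) : ℝ :=
  16 * (∑ c, w c ^ 2) / ((2 * Real.pi) ^ ((d : ℝ) / 2)) ^ 2

theorem vertexConst_nonneg (w : Fin d → ℝ) : 0 ≤ vertexConst w := by
  unfold vertexConst
  positivity

theorem norm_vertex_sq (hε : 0 ≤ ε) (x : Fin m → ZLat d) (k : Fin n → ZLat d) (p l l' : ZLat d) :
    ‖vertex w ε x k p l l'‖ ^ 2 =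
      dotw w p ^ 2 * (wSq x / 2)⁻¹ * (Jind d ε l l' ^ 2 * (wSq k / 2)⁻¹) *
        (4 * ε ^ ((d : ℝ) - 2) / ((2 * Real.pi) ^ ((d : ℝ) / 2)) ^ 2) := by
  have h_half {y : ℝ} (hy : 0 ≤ y) : (y ^ (-(1 / 2) : ℝ)) ^ 2 = y⁻¹ := by
    rw [← Real.rpow_mul_natCast hy, ← Real.rpow_neg_one]
    norm_num
  have h_eps : (ε ^ ((d : ℝ) / 2 - 1)) ^ 2 = ε ^ ((d : ℝ) - 2) := by
    rw [← Real.rpow_mul_natCast hε]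
    congr 1
    push_cast
    ring
  simp only [vertex, norm_mul, norm_div, Complex.norm_real, Complex.norm_I, Complex.norm_ofNat,
    mul_pow, div_pow, Real.norm_eq_abs, sq_abs, h_half (div_nonneg (wSq_nonneg _) zero_le_two),
    h_eps]
  ring

theorem enorm_vertex_sq_le (hd : d ≠ 2) (hε : 0 ≤ ε) {x : Fin m → ZLat d} {k : Fin n → ZLat d}
    {p l : ZLat d} (l' : ZLat d) (hp : nsq p ≤ wSq x) (hl : nsq l ≤ wSq k) :
    ‖vertex w ε x k p l l'‖ₑ ^ 2 ≤
      ENNReal.ofReal (vertexConst w) * ENNReal.ofReal (propagator ε l) := by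
  have h_real : ‖vertex w ε x k p l l'‖ ^ 2 ≤ vertexConst w * propagator ε l :=
    calc _ = _ := norm_vertex_sq hε x k p l l'
      _ ≤ (2 * ∑ c, w c ^ 2) * (2 * if l ≠ 0 ∧ ε * ‖l‖ ≤ 1 then (nsq l)⁻¹ else 0) *
          (4 * ε ^ ((d : ℝ) - 2) / ((2 * Real.pi) ^ ((d : ℝ) / 2)) ^ 2) := by
        have := wSq_nonneg k
        exact mul_le_mul_of_nonneg_right (mul_le_mul (dotw_sq_mul_inv_le hp)
          (Jind_sq_mul_inv_le hd hε l' hl) (by positivity) (by positivity)) (by positivity)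
      _ = vertexConst w * propagator ε l := by
        unfold vertexConst propagator
        ring
  rw [← ENNReal.ofReal_mul (vertexConst_nonneg w), ← ofReal_norm, ← ENNReal.ofReal_pow
    (norm_nonneg _)]
  exact ENNReal.ofReal_le_ofReal h_real

end Vertices

section Momenta

variable {d n : ℕ}

/-- The momenta after the pair at positions `i < j` has been merged; the merged momentum comes
first. -/
def merge {G : Type*} [Add G] (i j : Fin (n + 2)) (h : i < j) (k : Fin (n + 2) → G) :
    Fin (n + 1) → G :=
  Fin.cons (k i + k j) (remove2 k i j h)

/-- The momenta after the one at position `q` has been split into `l` and its complement, which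
become the first two. -/
def split {G : Type*} [Sub G] (q : Fin (n + 1)) (y : Fin (n + 1) → G) (l : G) : Fin (n + 2) → G :=
  Fin.cons l (Fin.cons (y q - l) fun a => y (q.succAbove a))

theorem TplusL_apply (w : Fin d → ℝ) (ε : ℝ) (i j : Fin (n + 2)) (h : i < j) (f : Chaos d (n + 1))
    (k : Fin (n + 2) → ZLat d) :
    TplusL d w ε i j h f k =
      -vertex w ε (merge i j h k) k (k i + k j) (k i) (k j) * f (merge i j h k) := by
  simp only [TplusL, negPow, AplusL, vertex, merge, Complex.ofReal_mul]
  ring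

theorem TminusL_apply (w : Fin d → ℝ) (ε : ℝ) (q : Fin (n + 1)) (f : Chaos d (n + 2))
    (y : Fin (n + 1) → ZLat d) :
    TminusL d w ε q f y =
      ∑' l, vertex w ε y (split q y l) (y q) l (y q - l) * f (split q y l) := by
  simp only [TminusL, negPow, AminusL, vertex, split, ← tsum_mul_left, Complex.ofReal_mul]
  exact tsum_congr fun l => by ring

theorem exists_remove2_eq {X : Type*} (i j : Fin (n + 2)) (h : i < j) :
    ∃ s : Fin (n + 1), j.succAbove s = i ∧
      ∀ (k : Fin (n + 2) → X) a, remove2 k i j h a = k (j.succAbove (s.succAbove a)) :=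
  ⟨_, Fin.succAbove_of_castSucc_lt j (i.castLT _) h, fun _ _ => rfl⟩

theorem sum_eq_add_sum_remove2 {G : Type*} [AddCommMonoid G] (i j : Fin (n + 2)) (h : i < j)
    (F : Fin (n + 2) → G) : ∑ u, F u = F i + F j + ∑ a, remove2 F i j h a := by
  obtain ⟨s, hs, h_rem⟩ := exists_remove2_eq (X := G) i j h
  simp only [h_rem]
  rw [Fin.sum_univ_succAbove F j, Fin.sum_univ_succAbove _ s, hs]
  abel

theorem split_injective2 {G : Type*} [AddGroup G] (q : Fin (n + 1)) :
    Function.Injective2 (split q : (Fin (n + 1) → G) → G → Fin (n + 2) → G) := by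
  intro y y' l l' hy
  obtain ⟨rfl, h_tail⟩ := Fin.cons_inj.mp hy
  obtain ⟨h_q, h_rest⟩ := Fin.cons_inj.mp h_tail
  refine ⟨funext fun u => ?_, rfl⟩
  rcases Fin.eq_self_or_eq_succAbove q u with rfl | ⟨a, rfl⟩
  · exact sub_left_injective h_q
  · exact congrFun h_rest a

/-- The position, before the merge, of each momentum present after it; `j` stands for the merged
pair. -/
def mergeIndex (i j : Fin (n + 2)) (h : i < j) : Fin (n + 1) → Fin (n + 2) :=
  Fin.cons j (remove2 id i j h)

theorem eq_or_exists_mergeIndex_eq {i j : Fin (n + 2)} (h : i < j) (u : Fin (n + 2)) :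
    u = i ∨ ∃ v, mergeIndex i j h v = u := by
  obtain ⟨s, hs, h_rem⟩ := exists_remove2_eq (X := Fin (n + 2)) i j h
  rcases Fin.eq_self_or_eq_succAbove j u with rfl | ⟨v, rfl⟩
  · exact Or.inr ⟨0, rfl⟩
  rcases Fin.eq_self_or_eq_succAbove s v with rfl | ⟨a, rfl⟩
  · exact Or.inl hs
  · exact Or.inr ⟨a.succ, h_rem id a⟩

theorem merge_prodMk_injective {G : Type*} [Add G] [IsLeftCancelAdd G] (i j : Fin (n + 2))
    (h : i < j) : Function.Injective fun k : Fin (n + 2) → G => (merge i j h k, k i) := by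
  intro k k' hk
  obtain ⟨h_merge, h_i⟩ := Prod.mk.inj hk
  obtain ⟨h_sum, h_rest⟩ := Fin.cons_inj.mp h_merge
  rw [h_i] at h_sum
  funext u
  rcases eq_or_exists_mergeIndex_eq h u with rfl | ⟨v, rfl⟩
  · exact h_i
  · exact Fin.cases (add_left_cancel h_sum) (congrFun h_rest) v

/-- The position, before the split, of the momentum from which each momentum present after it
stems. -/
def splitIndex (q : Fin (n + 1)) : Fin (n + 2) → Fin (n + 1) :=
  Fin.cons q (Fin.cons q q.succAbove)

theorem splitIndex_surjective (q : Fin (n + 1)) : Function.Surjective (splitIndex q) := fun u => by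
  rcases Fin.eq_self_or_eq_succAbove q u with rfl | ⟨a, rfl⟩
  · exact ⟨0, rfl⟩
  · exact ⟨a.succ.succ, rfl⟩

theorem sum_smul_eq_sum_smul_merge {G : Type*} [AddCommGroup G] (i j : Fin (n + 2)) (h : i < j)
    (b : Fin (n + 2) → ℤ) (k : Fin (n + 2) → G) :
    ∑ u, b u • k u = (b i - b j) • k i + ∑ v, b (mergeIndex i j h v) • merge i j h k v := by
  rw [sum_eq_add_sum_remove2 i j h, Fin.sum_univ_succ]
  simp only [mergeIndex, merge, Fin.cons_zero, Fin.cons_succ, remove2, id]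
  module

theorem sum_smul_split {G : Type*} [AddCommGroup G] (q : Fin (n + 1)) (b : Fin (n + 1) → ℤ)
    (y : Fin (n + 1) → G) (l : G) :
    ∑ v, b (splitIndex q v) • split q y l v = ∑ u, b u • y u := by
  rw [Fin.sum_univ_succ, Fin.sum_univ_succ, Fin.sum_univ_succAbove _ q]
  simp only [splitIndex, split, Fin.cons_zero, Fin.cons_succ]
  module

end Momenta

section Mass

variable {d n : ℕ} {w : Fin d → ℝ} {ε : ℝ}

theorem enorm_tsum_mul_sq_le {α : Type*} (a b : α → ℂ) :
    ‖∑' l, a l * b l‖ₑ ^ 2 ≤ (∑' l, ‖a l‖ₑ ^ 2) * ∑' l, ‖b l‖ₑ ^ 2 := by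
  let _ : MeasurableSpace α := ⊤
  have h_holder := ENNReal.lintegral_mul_le_Lp_mul_Lq (MeasureTheory.Measure.count (α := α))
    Real.HolderConjugate.two_two (measurable_from_top (f := fun l => ‖a l‖ₑ)).aemeasurable
    (measurable_from_top (f := fun l => ‖b l‖ₑ)).aemeasurable
  simp only [MeasureTheory.lintegral_count, Pi.mul_apply, ENNReal.rpow_ofNat] at h_holder
  have h_sq (X : ℝ≥0∞) : (X ^ (1 / 2 : ℝ)) ^ 2 = X := by
    rw [← ENNReal.rpow_mul_natCast]
    norm_num
  calc ‖∑' l, a l * b l‖ₑ ^ 2 ≤ (∑' l, ‖a l‖ₑ * ‖b l‖ₑ) ^ 2 := by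
        gcongr
        simpa only [enorm_mul] using enorm_tsum_le_tsum_enorm (f := fun l => a l * b l)
    _ ≤ ((∑' l, ‖a l‖ₑ ^ 2) ^ (1 / 2 : ℝ) * (∑' l, ‖b l‖ₑ ^ 2) ^ (1 / 2 : ℝ)) ^ 2 := by gcongr
    _ = _ := by rw [mul_pow, h_sq, h_sq]

/-- The squared `L²` norm of the restriction of the kernel `f` to the configurations in `S`, as an
extended nonnegative number, so that no summability has to be tracked. -/
def massOn (S : Set (Fin n → ZLat d)) (f : Chaos d n) : ℝ≥0∞ := ∑' k : S, ‖f k‖ₑ ^ 2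

/-- The configurations whose combined momentum with integer coefficients `b` is at most `R` in
supremum norm. -/
def slab (R : ℝ) (b : Fin n → ℤ) : Set (Fin n → ZLat d) := {k | ‖∑ u, b u • k u‖ ≤ R}

theorem mem_slab {R : ℝ} {b : Fin n → ℤ} {k : Fin n → ZLat d} :
    k ∈ slab R b ↔ ‖∑ u, b u • k u‖ ≤ R :=
  Iff.rfl

theorem enorm_TplusL_sq_le (hd : d ≠ 2) (hε : 0 ≤ ε) (i j : Fin (n + 2)) (h : i < j)
    (f : Chaos d (n + 1)) (k : Fin (n + 2) → ZLat d) :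
    ‖TplusL d w ε i j h f k‖ₑ ^ 2 ≤ ENNReal.ofReal (vertexConst w) *
      (ENNReal.ofReal (propagator ε (k i)) * ‖f (merge i j h k)‖ₑ ^ 2) := by
  rw [TplusL_apply, enorm_mul, enorm_neg, mul_pow, ← mul_assoc]
  gcongr
  exact enorm_vertex_sq_le hd hε _ (nsq_le_wSq (merge i j h k) 0) (nsq_le_wSq k i)

theorem enorm_TminusL_sq_le (hd : d ≠ 2) (hε : 0 ≤ ε) (q : Fin (n + 1)) (f : Chaos d (n + 2))
    (y : Fin (n + 1) → ZLat d) :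
    ‖TminusL d w ε q f y‖ₑ ^ 2 ≤
      ENNReal.ofReal (vertexConst w) * (∑' l : ZLat d, ENNReal.ofReal (propagator ε l)) *
        ∑' l, ‖f (split q y l)‖ₑ ^ 2 := by
  rw [TminusL_apply, ← ENNReal.tsum_mul_left (a := ENNReal.ofReal (vertexConst w))]
  refine (enorm_tsum_mul_sq_le _ _).trans ?_
  gcongr with l
  exact enorm_vertex_sq_le hd hε _ (nsq_le_wSq y q) (nsq_le_wSq (split q y l) 0)

theorem massOn_TplusL_le (hd : d ≠ 2) (hε : 0 ≤ ε) (i j : Fin (n + 2)) (h : i < j)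
    (f : Chaos d (n + 1)) {S : Set (Fin (n + 2) → ZLat d)} {S' : Set (Fin (n + 1) → ZLat d)}
    (hS : Set.MapsTo (merge i j h) S S') {L : (Fin (n + 1) → ZLat d) → Set (ZLat d)}
    (hL : ∀ k ∈ S, k i ∈ L (merge i j h k)) {A : ℝ≥0∞}
    (hA : ∀ x, ∑' l : L x, ENNReal.ofReal (propagator ε (l : ZLat d)) ≤ A) :
    massOn S (TplusL d w ε i j h f) ≤ ENNReal.ofReal (vertexConst w) * A * massOn S' f := by
  let pair (k : S) : S' × ZLat d := (⟨merge i j h k, hS k.2⟩, k.1 i)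
  have h_pair : Function.Injective pair := fun k k' hk =>
    Subtype.ext (merge_prodMk_injective i j h (congrArg (Prod.map Subtype.val id) hk))
  let weight (x : Fin (n + 1) → ZLat d) (l : ZLat d) : ℝ≥0∞ :=
    (L x).indicator (fun l => ENNReal.ofReal (propagator ε l)) l
  rw [mul_assoc]
  calc massOn S (TplusL d w ε i j h f)
      ≤ ∑' k : S, ENNReal.ofReal (vertexConst w) *
          (weight (pair k).1 (pair k).2 * ‖f (pair k).1‖ₑ ^ 2) := by
        refine ENNReal.tsum_le_tsum fun k => ?_
        rw [show weight (pair k).1 (pair k).2 = _ from Set.indicator_of_mem (hL k k.2) _]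
        exact enorm_TplusL_sq_le hd hε i j h f k
    _ ≤ ENNReal.ofReal (vertexConst w) * ∑' p : S' × ZLat d, weight p.1 p.2 * ‖f p.1‖ₑ ^ 2 := by
        rw [ENNReal.tsum_mul_left]
        gcongr
        exact ENNReal.tsum_comp_le_tsum_of_injective h_pair fun p => weight p.1 p.2 * ‖f p.1‖ₑ ^ 2
    _ ≤ ENNReal.ofReal (vertexConst w) * (A * massOn S' f) := by
        simp only [massOn, ENNReal.tsum_prod', ← ENNReal.tsum_mul_left (a := A),
          ENNReal.tsum_mul_right]
        gcongr with x
        exact (tsum_subtype _ _).symm.trans_le (hA x)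

theorem massOn_TminusL_le (hd : d ≠ 2) (hε : 0 ≤ ε) (q : Fin (n + 1)) (f : Chaos d (n + 2))
    {S : Set (Fin (n + 1) → ZLat d)} {S' : Set (Fin (n + 2) → ZLat d)}
    (hS : ∀ y ∈ S, ∀ l, split q y l ∈ S') :
    massOn S (TminusL d w ε q f) ≤
      ENNReal.ofReal (vertexConst w) * (∑' l : ZLat d, ENNReal.ofReal (propagator ε l)) *
        massOn S' f := by
  let glue (p : S × ZLat d) : S' := ⟨split q p.1 p.2, hS p.1 p.1.2 p.2⟩
  have h_glue : Function.Injective glue := fun p p' hp => by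
    obtain ⟨h_y, h_l⟩ := split_injective2 q (Subtype.ext_iff.mp hp)
    exact Prod.ext (Subtype.ext h_y) h_l
  calc massOn S (TminusL d w ε q f)
      ≤ ∑' y : S, _ := ENNReal.tsum_le_tsum fun y => enorm_TminusL_sq_le hd hε q f y
    _ = ENNReal.ofReal (vertexConst w) * (∑' l : ZLat d, ENNReal.ofReal (propagator ε l)) *
          ∑' p : S × ZLat d, ‖f (glue p)‖ₑ ^ 2 := by
        rw [ENNReal.tsum_mul_left, ENNReal.tsum_prod']
    _ ≤ _ := by
        gcongr
        exact ENNReal.tsum_comp_le_tsum_of_injective h_glue fun x => ‖f x‖ₑ ^ 2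

theorem merge_mem_slab {i j : Fin (n + 2)} (h : i < j) {b : Fin (n + 2) → ℤ} (hb : b i = b j)
    {R : ℝ} {k : Fin (n + 2) → ZLat d} (hk : k ∈ slab R b) :
    merge i j h k ∈ slab R (b ∘ mergeIndex i j h) := by
  rw [mem_slab, sum_smul_eq_sum_smul_merge i j h, hb, sub_self, zero_smul, zero_add] at hk
  exact hk

theorem split_mem_slab {q : Fin (n + 1)} {b : Fin (n + 1) → ℤ} {R : ℝ}
    {y : Fin (n + 1) → ZLat d} (hy : y ∈ slab R b) (l : ZLat d) :
    split q y l ∈ slab R (b ∘ splitIndex q) := by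
  simpa only [mem_slab, Function.comp_apply, sum_smul_split] using hy

/-- Given the momenta after the merge, the momentum `k i` is confined to at most `(2 R + 1)^d`
lattice points. -/
theorem massOn_slab_TplusL_le_of_ne (hd : d ≠ 2) (hε : 0 ≤ ε) {i j : Fin (n + 2)} (h : i < j)
    (f : Chaos d (n + 1)) {b : Fin (n + 2) → ℤ} (hb : b i ≠ b j) {R : ℝ} (hR : 0 ≤ R) :
    massOn (slab R b) (TplusL d w ε i j h f) ≤
      ENNReal.ofReal (vertexConst w) *
        (ENNReal.ofReal ((2 * R + 1) ^ d) * ENNReal.ofReal (ε ^ ((d : ℝ) - 2))) *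
          massOn Set.univ f := by
  refine massOn_TplusL_le hd hε i j h f (Set.mapsTo_univ _ _)
    (L := fun x => {l | ‖(b i - b j) • l + ∑ v, b (mergeIndex i j h v) • x v‖ ≤ R})
    (fun k hk => ?_) fun x =>
      tsum_propagator_le_of_encard_le hε (encard_norm_zsmul_add_le (sub_ne_zero.mpr hb) _ hR)
  rwa [mem_slab, sum_smul_eq_sum_smul_merge i j h] at hk

end Mass

section Dispersion

variable {d n : ℕ} {w : Fin d → ℝ} {ε : ℝ}

/-- `DispersedOff ε C V f`: the kernel `f` has mass at most `C`, and integer combinations of its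
momenta with coefficients outside the submodule `V` are spread out, in the sense that a slab of
width `R` only carries mass `C ε^(d-2) (2 R + 1)^d`. -/
structure DispersedOff (ε : ℝ) (C : ℝ≥0∞) (V : Submodule ℤ (Fin n → ℤ)) (f : Chaos d n) :
    Prop where
  massOn_univ_le : massOn Set.univ f ≤ C
  massOn_slab_le : ∀ b ∉ V, ∀ R : ℝ, 0 ≤ R →
    massOn (slab R b) f ≤ C * ENNReal.ofReal (ε ^ ((d : ℝ) - 2) * (2 * R + 1) ^ d)

theorem dispersedOff_top (ε : ℝ) (f : Chaos d n) : DispersedOff ε (massOn Set.univ f) ⊤ f :=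
  ⟨le_rfl, fun _ hb => absurd Submodule.mem_top hb⟩

/-- The functionals that agree on the pair `i`, `j` and descend to an element of `V` when this pair
is merged. -/
def mergeComap (i j : Fin (n + 2)) (h : i < j) (V : Submodule ℤ (Fin (n + 1) → ℤ)) :
    Submodule ℤ (Fin (n + 2) → ℤ) :=
  V.comap (LinearMap.funLeft ℤ ℤ (mergeIndex i j h)) ⊓
    LinearMap.eqLocus (LinearMap.proj i) (LinearMap.proj j)

/-- The functionals that become an element of `V` when the momentum at `q` is split. -/
def splitComap (q : Fin (n + 1)) (V : Submodule ℤ (Fin (n + 2) → ℤ)) :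
    Submodule ℤ (Fin (n + 1) → ℤ) :=
  V.comap (LinearMap.funLeft ℤ ℤ (splitIndex q))

theorem finrank_le_finrank_of_injOn {m : ℕ} (L : (Fin m → ℤ) →ₗ[ℤ] (Fin n → ℤ))
    {V' : Submodule ℤ (Fin m → ℤ)} {V : Submodule ℤ (Fin n → ℤ)} (hV : V' ≤ V.comap L)
    (hL : Set.InjOn L V') : Module.finrank ℤ V' ≤ Module.finrank ℤ V :=
  LinearMap.finrank_le_finrank_of_injective (f := L.restrict hV)
    fun x y hxy => Subtype.ext (hL x.2 y.2 (Subtype.ext_iff.mp hxy))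

theorem finrank_mergeComap_le (i j : Fin (n + 2)) (h : i < j)
    (V : Submodule ℤ (Fin (n + 1) → ℤ)) :
    Module.finrank ℤ (mergeComap i j h V) ≤ Module.finrank ℤ V := by
  refine finrank_le_finrank_of_injOn (LinearMap.funLeft ℤ ℤ (mergeIndex i j h)) inf_le_left
    fun b hb b' hb' hbb' => ?_
  have h_at (v : Fin (n + 1)) : b (mergeIndex i j h v) = b' (mergeIndex i j h v) := congrFun hbb' v
  funext u
  rcases eq_or_exists_mergeIndex_eq h u with rfl | ⟨v, rfl⟩
  · exact hb.2.trans ((h_at 0).trans hb'.2.symm)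
  · exact h_at v

theorem finrank_splitComap_le (q : Fin (n + 1)) (V : Submodule ℤ (Fin (n + 2) → ℤ)) :
    Module.finrank ℤ (splitComap q V) ≤ Module.finrank ℤ V :=
  finrank_le_finrank_of_injOn _ le_rfl
    (LinearMap.funLeft_injective_of_surjective ℤ ℤ _ (splitIndex_surjective q)).injOn

theorem DispersedOff.tplusL (hd : d ≠ 2) (hε : 0 ≤ ε) {A : ℝ≥0∞}
    (hA : ∑' l : ZLat d, ENNReal.ofReal (propagator ε l) ≤ A) {C : ℝ≥0∞}
    {V : Submodule ℤ (Fin (n + 1) → ℤ)} {f : Chaos d (n + 1)} (hf : DispersedOff ε C V f)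
    {i j : Fin (n + 2)} (h : i < j) :
    DispersedOff ε (ENNReal.ofReal (vertexConst w) * (A + 1) * C) (mergeComap i j h V)
      (TplusL d w ε i j h f) := by
  have h_free {S : Set (Fin (n + 2) → ZLat d)} {S' : Set (Fin (n + 1) → ZLat d)}
      (hS : Set.MapsTo (merge i j h) S S') : massOn S (TplusL d w ε i j h f) ≤
        ENNReal.ofReal (vertexConst w) * (A + 1) * massOn S' f :=
    massOn_TplusL_le hd hε i j h f hS (L := fun _ => Set.univ) (fun _ _ => Set.mem_univ _)
      fun _ => (tsum_univ _).trans_le (hA.trans le_self_add)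
  refine ⟨(h_free (Set.mapsTo_univ _ _)).trans ?_, fun b hb R hR => ?_⟩
  · gcongr
    exact hf.massOn_univ_le
  by_cases h_eq : b i = b j
  · have h_descends : b ∘ mergeIndex i j h ∉ V := fun hV => hb ⟨hV, h_eq⟩
    refine (h_free fun k => merge_mem_slab h h_eq).trans ?_
    rw [mul_assoc _ C]
    gcongr
    exact hf.massOn_slab_le _ h_descends R hR
  · have h_mass : massOn Set.univ f ≤ (A + 1) * C :=
      hf.massOn_univ_le.trans (le_mul_of_one_le_left' le_add_self)
    calc _ ≤ _ := massOn_slab_TplusL_le_of_ne hd hε h f h_eq hR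
      _ ≤ ENNReal.ofReal (vertexConst w) * (ENNReal.ofReal ((2 * R + 1) ^ d) *
          ENNReal.ofReal (ε ^ ((d : ℝ) - 2))) * ((A + 1) * C) := by gcongr
      _ = _ := by
        rw [ENNReal.ofReal_mul (by positivity)]
        ring

theorem DispersedOff.tminusL (hd : d ≠ 2) (hε : 0 ≤ ε) {A : ℝ≥0∞}
    (hA : ∑' l : ZLat d, ENNReal.ofReal (propagator ε l) ≤ A) {C : ℝ≥0∞}
    {V : Submodule ℤ (Fin (n + 2) → ℤ)} {f : Chaos d (n + 2)} (hf : DispersedOff ε C V f)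
    (q : Fin (n + 1)) :
    DispersedOff ε (ENNReal.ofReal (vertexConst w) * A * C) (splitComap q V)
      (TminusL d w ε q f) := by
  refine ⟨(massOn_TminusL_le hd hε q f fun _ _ _ => Set.mem_univ _).trans ?_,
    fun b hb R hR => (massOn_TminusL_le hd hε q f fun _ => split_mem_slab).trans ?_⟩
  · gcongr
    exact hf.massOn_univ_le
  · rw [mul_assoc _ C]
    gcongr
    exact hf.massOn_slab_le _ hb R hR

theorem PMove.exists_dispersedOff_app (hd : 3 ≤ d) (w : Fin d → ℝ) {a b : ℕ} (mv : PMove a b)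
    (V : Submodule ℤ (Fin a → ℤ)) :
    ∃ (K : ℝ≥0) (V' : Submodule ℤ (Fin b → ℤ)), Module.finrank ℤ V' ≤ Module.finrank ℤ V ∧
      ∀ ε : ℝ, 0 < ε → ε ≤ 1 → ∀ (C : ℝ≥0∞) (f : Chaos d a),
        DispersedOff ε C V f → DispersedOff ε (K * C) V' (mv.app d w ε f) := by
  obtain ⟨A, hA⟩ := exists_tsum_propagator_le hd
  have hd2 : d ≠ 2 := by lia
  cases mv with
  | plus n i j h =>
    refine ⟨(vertexConst w).toNNReal * (A + 1), mergeComap i j h V,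
      finrank_mergeComap_le i j h V, fun ε hε hε1 C f hf => ?_⟩
    exact_mod_cast hf.tplusL hd2 hε.le (hA ε hε hε1) h
  | minus n q =>
    refine ⟨(vertexConst w).toNNReal * A, splitComap q V,
      finrank_splitComap_le q V, fun ε hε hε1 C f hf => ?_⟩
    exact_mod_cast hf.tminusL hd2 hε.le (hA ε hε hε1) q

theorem PPath.exists_dispersedOff_app (hd : 3 ≤ d) (w : Fin d → ℝ) {a b : ℕ} (p : PPath a b)
    (V : Submodule ℤ (Fin a → ℤ)) :
    ∃ (K : ℝ≥0) (V' : Submodule ℤ (Fin b → ℤ)), Module.finrank ℤ V' ≤ Module.finrank ℤ V ∧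
      ∀ ε : ℝ, 0 < ε → ε ≤ 1 → ∀ (C : ℝ≥0∞) (f : Chaos d a),
        DispersedOff ε C V f → DispersedOff ε (K * C) V' (p.app d w ε f) := by
  induction p with
  | nil => exact ⟨1, V, le_rfl, fun ε _ _ C f hf => by simpa only [ENNReal.coe_one, one_mul]⟩
  | cons mv p ih =>
    obtain ⟨K₁, V₁, h_rank₁, h₁⟩ := mv.exists_dispersedOff_app hd w V
    obtain ⟨K₂, V₂, h_rank₂, h₂⟩ := ih V₁
    refine ⟨K₂ * K₁, V₂, h_rank₂.trans h_rank₁, fun ε hε hε1 C f hf => ?_⟩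
    rw [ENNReal.coe_mul, mul_assoc]
    exact h₂ ε hε hε1 _ _ (h₁ ε hε hε1 C f hf)

theorem exists_single_notMem_of_finrank_lt {V : Submodule ℤ (Fin n → ℤ)}
    (hV : Module.finrank ℤ V < n) : ∃ u, Pi.single u 1 ∉ V := by
  by_contra! h_mem
  have h_top : V = ⊤ := by
    rw [eq_top_iff, ← (Pi.basisFun ℤ (Fin n)).span_eq, Submodule.span_le]
    rintro _ ⟨u, rfl⟩
    simpa only [Pi.basisFun_apply, SetLike.mem_coe] using h_mem u
  rw [h_top, finrank_top, Module.finrank_fin_fun] at hV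
  exact hV.false

theorem PPath.exists_dispersed_single (hd : 3 ≤ d) (w : Fin d → ℝ) {κ M : ℕ} (hM : κ < M)
    (p : PPath κ M) :
    ∃ (K : ℝ≥0) (V : Submodule ℤ (Fin M → ℤ)) (u : Fin M), Pi.single u 1 ∉ V ∧
      ∀ ε : ℝ, 0 < ε → ε ≤ 1 → ∀ f : Chaos d κ,
        DispersedOff ε (K * massOn Set.univ f) V (p.app d w ε f) := by
  obtain ⟨K, V, h_rank, hV⟩ := p.exists_dispersedOff_app hd w ⊤
  rw [finrank_top, Module.finrank_fin_fun] at h_rank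
  obtain ⟨u, hu⟩ := exists_single_notMem_of_finrank_lt (h_rank.trans_lt hM)
  exact ⟨K, V, u, hu, fun ε hε hε1 f => hV ε hε hε1 _ f (dispersedOff_top ε f)⟩

end Dispersion

section Conclusion

variable {d n : ℕ}

theorem massOn_univ (f : Chaos d n) : massOn Set.univ f = ∑' k, ‖f k‖ₑ ^ 2 :=
  tsum_univ fun k => ‖f k‖ₑ ^ 2

theorem inv_half_wSq_le_two (k : Fin n → ZLat d) : (wSq k / 2)⁻¹ ≤ 2 := by
  by_cases hk : ∃ u, k u ≠ 0
  · obtain ⟨u, hu⟩ := hk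
    have h_one := (one_le_nsq hu).trans (nsq_le_wSq k u)
    rw [inv_div, div_le_iff₀ (by linarith)]
    linarith
  · push Not at hk
    have h_zero : wSq k = 0 := by simp [wSq, nsq, hk]
    norm_num [h_zero]

theorem inv_half_wSq_le_of_notMem_slab {k : Fin n → ZLat d} {u : Fin n} {R : ℝ} (hR : 0 < R)
    (hk : k ∉ slab R (Pi.single u 1)) : (wSq k / 2)⁻¹ ≤ 2 / R ^ 2 := by
  have h_single : ∑ v, (Pi.single u 1 : Fin n → ℤ) v • k v = k u := by
    simp [Pi.single_apply]
  rw [mem_slab, h_single, not_le] at hk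
  rw [inv_div]
  gcongr
  exact (pow_le_pow_left₀ hR.le hk.le 2).trans ((norm_sq_le_nsq _).trans (nsq_le_wSq k u))

theorem tsum_inv_half_wSq_mul_le_massOn_add (f : Chaos d n) (u : Fin n) {R : ℝ} (hR : 0 < R) :
    ∑' k, ENNReal.ofReal ((wSq k / 2) ^ (-(1 : ℝ)) * ‖f k‖ ^ 2) ≤
      2 * massOn (slab R (Pi.single u 1)) f +
        ENNReal.ofReal (2 / R ^ 2) * massOn Set.univ f := by
  have h_term (k : Fin n → ZLat d) :
      ENNReal.ofReal ((wSq k / 2) ^ (-(1 : ℝ)) * ‖f k‖ ^ 2) ≤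
        2 * (slab R (Pi.single u 1)).indicator (fun k => ‖f k‖ₑ ^ 2) k +
          ENNReal.ofReal (2 / R ^ 2) * ‖f k‖ₑ ^ 2 := by
    rw [Real.rpow_neg_one,
      ENNReal.ofReal_mul (inv_nonneg.mpr (div_nonneg (wSq_nonneg k) zero_le_two)),
      ENNReal.ofReal_pow (norm_nonneg _), ofReal_norm]
    by_cases hk : k ∈ slab R (Pi.single u 1)
    · rw [Set.indicator_of_mem hk]
      refine le_add_right ?_
      gcongr
      simpa using ENNReal.ofReal_le_ofReal (inv_half_wSq_le_two k)
    · refine le_add_left ?_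
      gcongr
      exact inv_half_wSq_le_of_notMem_slab hR hk
  refine (ENNReal.tsum_le_tsum h_term).trans_eq ?_
  rw [ENNReal.tsum_add, ENNReal.tsum_mul_left, ENNReal.tsum_mul_left, massOn_univ, massOn,
    tsum_subtype (slab R (Pi.single u 1)) fun k => ‖f k‖ₑ ^ 2]

/-- The width `R = ε^(-(d-2)/(d+2))` balances the contributions `ε^(d-2) R^d` and `R⁻²` of the slab
and of its complement. -/
theorem DispersedOff.tsum_inv_half_wSq_mul_le (hd : 2 ≤ d) {ε : ℝ} (hε : 0 < ε)
    (hε1 : ε ≤ 1) {C : ℝ≥0∞} {V : Submodule ℤ (Fin n → ℤ)} {f : Chaos d n}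
    (hf : DispersedOff ε C V f) {u : Fin n} (hu : Pi.single u 1 ∉ V) :
    ∑' k, ENNReal.ofReal ((wSq k / 2) ^ (-(1 : ℝ)) * ‖f k‖ ^ 2) ≤
      ENNReal.ofReal ((2 * 3 ^ d + 2) * ε ^ (2 * ((d : ℝ) - 2) / (d + 2))) * C := by
  have hd2 : (2 : ℝ) ≤ d := mod_cast hd
  set θ : ℝ := ((d : ℝ) - 2) / (d + 2)
  have hθ : 0 ≤ θ := div_nonneg (by linarith) (by positivity)
  set R : ℝ := ε ^ (-θ)
  have hR : 1 ≤ R := Real.one_le_rpow_of_pos_of_le_one_of_nonpos hε hε1 (by linarith)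
  have h_slab : ε ^ ((d : ℝ) - 2) * (2 * R + 1) ^ d ≤ 3 ^ d * ε ^ (2 * ((d : ℝ) - 2) / (d + 2)) :=
    calc ε ^ ((d : ℝ) - 2) * (2 * R + 1) ^ d ≤ ε ^ ((d : ℝ) - 2) * (3 * R) ^ d := by
          gcongr
          linarith
      _ = 3 ^ d * (ε ^ ((d : ℝ) - 2) * ε ^ (-θ * d)) := by
          rw [mul_pow, ← Real.rpow_mul_natCast hε.le]
          ring
      _ = 3 ^ d * ε ^ (2 * ((d : ℝ) - 2) / (d + 2)) := by
          rw [← Real.rpow_add hε]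
          congr 2
          simp only [θ]
          field_simp
          ring
  have h_far : 2 / R ^ 2 = 2 * ε ^ (2 * ((d : ℝ) - 2) / (d + 2)) := by
    rw [← Real.rpow_mul_natCast hε.le, div_eq_mul_inv, ← Real.rpow_neg hε.le]
    congr 2
    simp only [θ]
    push_cast
    ring
  calc _ ≤ _ := tsum_inv_half_wSq_mul_le_massOn_add f u (R := R) (by linarith)
    _ ≤ 2 * (C * ENNReal.ofReal (3 ^ d * ε ^ (2 * ((d : ℝ) - 2) / (d + 2)))) +
        ENNReal.ofReal (2 * ε ^ (2 * ((d : ℝ) - 2) / (d + 2))) * C := by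
      rw [h_far]
      gcongr
      · exact (hf.massOn_slab_le _ hu R (by linarith)).trans (by gcongr)
      · exact hf.massOn_univ_le
    _ = _ := by
      rw [add_mul, ENNReal.ofReal_add (by positivity) (by positivity), mul_assoc 2 ((3 : ℝ) ^ d),
        ENNReal.ofReal_mul zero_le_two (q := 3 ^ d * _), ENNReal.ofReal_ofNat]
      ring

theorem tendsto_sqrt_tsum_zero {α ι : Type*} {l : Filter ι} {F : ι → α → ℝ}
    (hF : ∀ t a, 0 ≤ F t a) (h : Tendsto (fun t => ∑' a, ENNReal.ofReal (F t a)) l (𝓝 0)) :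
    Tendsto (fun t => √(∑' a, F t a)) l (𝓝 0) := by
  have h_toReal (t : ι) : (∑' a, ENNReal.ofReal (F t a)).toReal = ∑' a, F t a := by
    rw [ENNReal.tsum_toReal_eq fun _ => ENNReal.ofReal_ne_top]
    exact tsum_congr fun a => ENNReal.toReal_ofReal (hF t a)
  simpa only [Function.comp_def, h_toReal, ENNReal.toReal_zero, Real.sqrt_zero] using
    (Real.continuous_sqrt.tendsto _).comp ((ENNReal.tendsto_toReal ENNReal.zero_ne_top).comp h)

theorem summable_norm_sq_Ebase {κ : ℕ} (j : Fin κ → ZLat d) :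
    Summable fun k => ‖Ebase d κ j k‖ ^ 2 := by
  refine summable_of_hasFiniteSupport ((Set.finite_range fun σ : Equiv.Perm (Fin κ) => j ∘ σ).subset
    fun k hk => ?_)
  by_contra h_ne
  refine hk ?_
  have h_zero (σ : Equiv.Perm (Fin κ)) : k ≠ j ∘ σ := fun h => h_ne ⟨σ, h.symm⟩
  simp [Ebase, h_zero]

theorem massOn_univ_ne_top {f : Chaos d n} (hf : Summable fun k => ‖f k‖ ^ 2) :
    massOn Set.univ f ≠ ⊤ := by
  simp only [massOn_univ, ← ofReal_norm, ← ENNReal.ofReal_pow (norm_nonneg _)]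
  exact hf.tsum_ofReal_ne_top

theorem tendsto_ofReal_const_mul_rpow_mul {c θ : ℝ} (hθ : 0 < θ) {C : ℝ≥0∞} (hC : C ≠ ⊤) :
    Tendsto (fun ε : ℝ => ENNReal.ofReal (c * ε ^ θ) * C) (𝓝[>] 0) (𝓝 0) := by
  have h_real : Tendsto (fun ε : ℝ => c * ε ^ θ) (𝓝[>] 0) (𝓝 0) := by
    have h := (Real.continuousAt_rpow_const 0 θ (Or.inr hθ.le)).tendsto.mono_left
      (nhdsWithin_le_nhds (s := Set.Ioi 0))
    simpa only [Real.zero_rpow hθ.ne', mul_zero] using h.const_mul c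
  simpa only [ENNReal.ofReal_zero, zero_mul] using
    ENNReal.Tendsto.mul_const (ENNReal.tendsto_ofReal h_real) (Or.inr hC)

end Conclusion

theorem stmt14_general {d : ℕ} (hd : 3 ≤ d) (w : Fin d → ℝ) {κ M : ℕ} (hM : κ < M) (p : PPath κ M)
    {f : Chaos d κ} (hf : Summable fun k => ‖f k‖ ^ 2) :
    Tendsto (fun ε : ℝ => √(∑' k : Fin M → ZLat d,
      (wSq k / 2) ^ (-(1 : ℝ)) * ‖PPath.app d w ε p f k‖ ^ 2)) (𝓝[>] 0) (𝓝 0) := by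
  obtain ⟨K, V, u, hu, h_disp⟩ := p.exists_dispersed_single hd w hM
  have hd3 : (3 : ℝ) ≤ d := mod_cast hd
  have h_bound : ∀ᶠ ε in 𝓝[>] (0 : ℝ), ∑' k : Fin M → ZLat d,
      ENNReal.ofReal ((wSq k / 2) ^ (-(1 : ℝ)) * ‖PPath.app d w ε p f k‖ ^ 2) ≤
        ENNReal.ofReal ((2 * 3 ^ d + 2) * ε ^ (2 * ((d : ℝ) - 2) / (d + 2))) *
          (K * massOn Set.univ f) := by
    filter_upwards [Ioc_mem_nhdsGT zero_lt_one] with ε hε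
    exact (h_disp ε hε.1 hε.2 f).tsum_inv_half_wSq_mul_le (by lia) hε.1 hε.2 hu
  have h_zero := tendsto_ofReal_const_mul_rpow_mul (c := 2 * 3 ^ d + 2)
    (θ := 2 * ((d : ℝ) - 2) / (d + 2)) (div_pos (by linarith) (by positivity))
    (ENNReal.mul_ne_top ENNReal.coe_ne_top (massOn_univ_ne_top hf) : K * massOn Set.univ f ≠ ⊤)
  refine tendsto_sqrt_tsum_zero (fun ε k => ?_)
    (tendsto_of_tendsto_of_tendsto_of_le_of_le' tendsto_const_nhds h_zero
      (Eventually.of_forall fun _ => zero_le) h_bound)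
  have := wSq_nonneg k
  positivity

/-- vanishing of off-the-ground-chaos compositions, `d ≥ 3`.
For any fixed path of creation/annihilation moves starting at chaos level `κ ∈ {1,2}`,
staying at heights `p_s ≥ 1` (i.e. levels `≥ κ`) and ending at a level `M ≥ κ + 1`
(i.e. final height `m ≥ 2`), the `(−L₀)^{−1/2}`-norm of the composition applied to the
elementary kernel vanishes along the sequence `ε_N = (N + 1/2)⁻¹ → 0`. -/
theorem stmt14 (d : ℕ) (hd : 3 ≤ d) (w : Fin d → ℝ) (hw : w ≠ 0)
    (κ : ℕ) (hκ : κ = 1 ∨ κ = 2) (M : ℕ) (hM : κ + 1 ≤ M)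
    (p : PPath κ M) (hlev : p.levelsGE κ) (hlen : 1 ≤ p.length)
    (j : Fin κ → ZLat d) (hj : ∀ t, j t ≠ 0) :
    Filter.Tendsto
      (fun N : ℕ => Real.sqrt (∑' k : Fin M → ZLat d,
        (wSq k / 2) ^ (-(1:ℝ)) *
          ‖PPath.app d w (((N:ℝ) + 1/2)⁻¹) p (Ebase d κ j) k‖^2))
      Filter.atTop (nhds 0) :=
  (stmt14_general hd w hM p (summable_norm_sq_Ebase j)).comp (tendsto_inv_atTop_nhdsGT_zero.comp
    (tendsto_natCast_atTop_atTop.atTop_add tendsto_const_nhds))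

end SBE
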